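/- arXiv:2201.10847 — 7 statements merged into one kernel-verified Lean document; each statement's English description precedes it below -/
import Mathlib

section
/- Let G be a t.d.l.c. group and μ a left Haar measure on G. If G is CO-bounded with respect to μ, i.e., there exists a constant c such that μ(U) ≤ c for every compact open subgroup U of G, then G is unimodular: μ is also invariant under right translations. -/
open MeasureTheory

theorem vanDantzig_aux {G : Type*} [Group G] [TopologicalSpace G]
    [IsTopologicalGroup G] [LocallyCompactSpace G] [TotallyDisconnectedSpace G] [T2Space G] :
    ∃ U : Subgroup G, IsCompact (U : Set G) ∧ IsOpen (U : Set G) := by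
  obtain ⟨K, hK, hK1⟩ := exists_compact_mem_nhds (1 : G)
  obtain ⟨W, hW, h1W, hWK⟩ := (loc_compact_Haus_tot_disc_of_zero_dim (H := G)).mem_nhds_iff.1 hK1
  have hW' : IsClopen W := hW
  have hWc : IsCompact W := hK.of_isClosed_subset hW'.isClosed hWK
  obtain ⟨V, hV, hWV⟩ := compact_open_separated_mul_right hWc hW'.isOpen subset_rfl
  let U : Subgroup G :=
    { carrier := {h | ∀ w, w * h ∈ W ↔ w ∈ W}
      one_mem' := by intro w; simp
      mul_mem' := by
        intro a b ha hb w
        rw [← mul_assoc, hb, ha]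
      inv_mem' := by
        intro a ha w
        rw [← ha (w * a⁻¹)]; simp }
  have hUo : IsOpen (U : Set G) := by
    apply Subgroup.isOpen_of_mem_nhds (g := 1)
    have hV' : V⁻¹ ∈ nhds (1 : G) := inv_mem_nhds_one G hV
    filter_upwards [hV, hV'] with h h1 h2 w
    constructor
    · intro hw
      have := hWV (Set.mul_mem_mul hw h2)
      simpa using this
    · intro hw
      exact hWV (Set.mul_mem_mul hw h1)
  refine ⟨U, hWc.of_isClosed_subset (U.isClosed_of_isOpen hUo) ?_, hUo⟩
  intro h hh
  have := (hh 1).2 h1W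
  simpa using this

/-- A totally disconnected locally compact group that is
`CO`-bounded with respect to a left Haar measure `μ` (i.e. there is a constant `c`
bounding the measure of every compact open subgroup) is unimodular:
`μ` is also right-invariant. -/
theorem tdlc_CObounded_unimodular {G : Type*} [Group G] [TopologicalSpace G]
    [IsTopologicalGroup G] [LocallyCompactSpace G] [TotallyDisconnectedSpace G] [T2Space G]
    [MeasurableSpace G] [BorelSpace G]
    (μ : Measure G) [μ.IsHaarMeasure] [μ.Regular]
    (hbound : ∃ c : NNReal, ∀ U : Subgroup G,
      IsCompact (U : Set G) → IsOpen (U : Set G) → μ (U : Set G) ≤ c) :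
    μ.IsMulRightInvariant := by
  obtain ⟨c, hc⟩ := hbound
  obtain ⟨U, hUc, hUo⟩ := vanDantzig_aux (G := G)
  have key : ∀ g : G, Measure.map (· * g) μ = Measure.modularCharacterFun g • μ := by
    intro g
    have : (Measure.map (· * g) μ).Regular := Measure.Regular.map (Homeomorph.mulRight g)
    rw [Measure.modularCharacterFun_eq_haarScalarFactor μ]
    exact Measure.isMulLeftInvariant_eq_smul_of_regular _ μ
  have hU0 : μ (U : Set G) ≠ 0 := (hUo.measure_pos μ ⟨1, U.one_mem⟩).ne'
  have hUt : μ (U : Set G) ≠ ⊤ := hUc.measure_lt_top.ne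
  have bd : ∀ g : G, (Measure.modularCharacterFun g : ENNReal) * μ (U : Set G) ≤ c := by
    intro g
    let f : G ≃ₜ G := (Homeomorph.mulLeft g⁻¹).trans (Homeomorph.mulRight g)
    let U' : Subgroup G := U.comap (MulAut.conj g⁻¹).toMonoidHom
    have hU' : (U' : Set G) = f ⁻¹' U := by
      ext x
      simp [U', f]
    have h1 := hc U' (by rw [hU']; exact f.isCompact_preimage.2 hUc)
      (by rw [hU']; exact hUo.preimage f.continuous)
    have h2 : μ (U' : Set G) = (Measure.modularCharacterFun g : ENNReal) * μ (U : Set G) := by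
      have h3 : (U' : Set G) = (g⁻¹ * ·) ⁻¹' ((· * g) ⁻¹' (U : Set G)) := by
        rw [hU']; rfl
      rw [h3, measure_preimage_mul, ← Measure.map_apply (measurable_mul_const g) hUo.measurableSet,
        key]
      rfl
    rwa [h2] at h1
  have le1 : ∀ g : G, Measure.modularCharacterFun g ≤ 1 := by
    intro g
    by_contra! hlt
    have bd' : ∀ n : ℕ, Measure.modularCharacterFun g ^ n ≤ c / (μ (U : Set G)).toNNReal := by
      intro n
      have h := bd (g ^ n)
      have e : Measure.modularCharacterFun (g ^ n) = Measure.modularCharacterFun g ^ n :=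
        map_pow (Measure.modularCharacter (G := G)) g n
      rw [e, ← ENNReal.coe_toNNReal hUt] at h
      rw [le_div_iff₀ (ENNReal.toNNReal_pos hU0 hUt)]
      exact_mod_cast h
    obtain ⟨n, hn⟩ := pow_unbounded_of_one_lt (c / (μ (U : Set G)).toNNReal) hlt
    exact absurd (bd' n) (not_le.2 hn)
  refine ⟨fun g => ?_⟩
  have e : Measure.modularCharacterFun g = 1 := by
    apply le_antisymm (le1 g)
    have h := Measure.modularCharacterFun_map_mul g g⁻¹
    rw [mul_inv_cancel, Measure.modularCharacterFun_map_one] at h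
    rw [h]
    exact mul_le_of_le_one_right' (le1 g⁻¹)
  rw [key, e, one_smul]
end

section
/- Let G be a t.d.l.c. group with left Haar measure μ, and assume G is CO-bounded with respect to μ. Then every strictly increasing sequence of compact open subgroups of G is finite; that is, there is no map U : ℕ → Subgroup G such that each U(n) is compact and open and U is strictly monotone with respect to inclusion. -/
open MeasureTheory

/-- In a totally disconnected locally compact group that is
`CO`-bounded with respect to a left Haar measure `μ`, there is no strictly
increasing sequence of compact open subgroups. -/
theorem tdlc_CObounded_no_strict_chain {G : Type*} [Group G] [TopologicalSpace G]
    [IsTopologicalGroup G] [LocallyCompactSpace G] [TotallyDisconnectedSpace G] [T2Space G]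
    [MeasurableSpace G] [BorelSpace G]
    (μ : Measure G) [μ.IsHaarMeasure] [μ.Regular]
    (hbound : ∃ c : NNReal, ∀ U : Subgroup G,
      IsCompact (U : Set G) → IsOpen (U : Set G) → μ (U : Set G) ≤ c) :
    ¬ ∃ U : ℕ → Subgroup G,
        (∀ n, IsCompact (U n : Set G) ∧ IsOpen (U n : Set G)) ∧ StrictMono U := by
  rintro ⟨U, hU, hmono⟩
  obtain ⟨c, hc⟩ := hbound
  have hstep : ∀ n, μ (U n : Set G) + μ (U n : Set G) ≤ μ (U (n + 1) : Set G) := by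
    intro n
    have hlt : U n < U (n + 1) := hmono (Nat.lt_succ_self n)
    obtain ⟨hle, g, hg, hgn⟩ := SetLike.lt_iff_le_and_exists.1 hlt
    have hpre : μ ((fun x => g * x) ⁻¹' (U n : Set G)) = μ (U n : Set G) :=
      measure_preimage_mul μ g _
    have hopen : IsOpen ((fun x => g * x) ⁻¹' (U n : Set G)) :=
      (hU n).2.preimage (continuous_const_mul g)
    have hdisj : Disjoint (U n : Set G) ((fun x => g * x) ⁻¹' (U n : Set G)) := by
      rw [Set.disjoint_left]
      intro x hx hx'
      exact hgn (((U n).mul_mem_cancel_right hx).1 hx')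
    have hun := measure_union (μ := μ) hdisj hopen.measurableSet
    rw [hpre] at hun
    rw [← hun]
    apply measure_mono
    rintro x (hx | hx)
    · exact hle hx
    · exact ((U (n + 1)).mul_mem_cancel_left hg).1 (hle hx)
  have hlow : ∀ n : ℕ, (n : ENNReal) * μ (U 0 : Set G) ≤ μ (U n : Set G) := by
    intro n
    induction n with
    | zero => simp
    | succ k ih =>
      refine le_trans ?_ (hstep k)
      push_cast
      rw [add_mul, one_mul]
      exact add_le_add ih (measure_mono (hmono.monotone (Nat.zero_le k)))
  have hpos : μ (U 0 : Set G) ≠ 0 :=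
    (hU 0).2.measure_ne_zero μ ⟨1, (U 0).one_mem⟩
  obtain ⟨n, hn⟩ := ENNReal.exists_nat_mul_gt hpos (ENNReal.coe_ne_top (r := c))
  exact absurd (hn.trans_le ((hlow n).trans (hc (U n) (hU n).1 (hU n).2))) (lt_irrefl _)
end

section
/- Let G be a t.d.l.c. group. If every group homomorphism φ from G to the additive group ℝ whose kernel is an open subgroup of G (equivalently, every homomorphism continuous with respect to the discrete topology on ℝ) is trivial, then G is unimodular: every left Haar measure on G is also invariant under right translations. -/
open MeasureTheory
open scoped Pointwise

/-- If every group homomorphism from a t.d.l.c. group `G` to the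
additive group `ℝ` with open kernel is trivial, then `G` is unimodular: every
left Haar measure on `G` is also right-invariant. -/
theorem tdlc_unimodular_of_no_open_kernel_hom {G : Type*} [Group G] [TopologicalSpace G]
    [IsTopologicalGroup G] [LocallyCompactSpace G] [TotallyDisconnectedSpace G] [T2Space G]
    [MeasurableSpace G] [BorelSpace G]
    (htriv : ∀ φ : G → ℝ, (∀ x y : G, φ (x * y) = φ x + φ y) →
      IsOpen {g : G | φ g = 0} → φ = 0) :
    ∀ μ : Measure G, μ.IsHaarMeasure → μ.Regular → μ.IsMulRightInvariant := by
  intro μ hμ hr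
  have key : ∀ g : G, Measure.map (· * g) μ = Measure.modularCharacterFun g • μ := by
    intro g
    rw [Measure.modularCharacterFun_eq_haarScalarFactor μ g]
    have : (Measure.map (· * g) μ).Regular := Measure.Regular.map (Homeomorph.mulRight g)
    exact Measure.isMulLeftInvariant_eq_smul_of_regular _ μ
  have hlog := htriv (fun g => Real.log (Measure.modularCharacterFun g : ℝ)) ?_ ?_
  · constructor
    intro g
    rw [key g]
    have h1 := congrFun hlog g
    have hp : (0 : ℝ) < Measure.modularCharacterFun g := by
      exact_mod_cast Measure.modularCharacterFun_pos g
    have h2 : (Measure.modularCharacterFun g : ℝ) = 1 :=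
      Real.eq_one_of_pos_of_log_eq_zero hp h1
    have h3 : Measure.modularCharacterFun g = 1 := by exact_mod_cast h2
    rw [h3, one_smul]
  · intro x y
    have hp : ∀ g : G, (Measure.modularCharacterFun g : ℝ) ≠ 0 := fun g => by
      exact_mod_cast (Measure.modularCharacterFun_pos g).ne'
    rw [Measure.modularCharacterFun_map_mul, NNReal.coe_mul, Real.log_mul (hp x) (hp y)]
  · obtain ⟨K, hK, hK1⟩ := exists_compact_mem_nhds (1 : G)
    obtain ⟨U, hU, h1U, hUK⟩ := loc_compact_Haus_tot_disc_of_zero_dim.mem_nhds_iff.1 hK1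
    have hUc : IsCompact U := hK.of_isClosed_subset hU.isClosed hUK
    obtain ⟨V, hV, hUV⟩ := compact_open_separated_mul_right hUc hU.isOpen subset_rfl
    have hker : ∀ v ∈ V ∩ V⁻¹, Measure.modularCharacterFun v = 1 := by
      rintro v ⟨hv, hv'⟩
      have e : (· * v) ⁻¹' U = U := by
        ext x
        constructor
        · intro hx
          have := hUV (Set.mul_mem_mul hx hv')
          simpa using this
        · intro hx
          exact hUV (Set.mul_mem_mul hx hv)
      have h := congrArg (fun m => m U) (key v)
      simp only [Measure.smul_apply] at h
      rw [Measure.map_apply (measurable_mul_const v) hU.isOpen.measurableSet, e] at h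
      have h0 : μ U ≠ 0 := hU.isOpen.measure_ne_zero μ ⟨1, h1U⟩
      have ht : μ U ≠ ⊤ := hUc.measure_ne_top
      have h' : (1 : ENNReal) * μ U = (Measure.modularCharacterFun v : ENNReal) * μ U := by
        rw [one_mul]; exact h
      have := (ENNReal.mul_left_inj h0 ht).1 h'
      exact_mod_cast this.symm
    rw [isOpen_iff_mem_nhds]
    intro g hg
    have hn : V ∩ V⁻¹ ∈ nhds (1 : G) := Filter.inter_mem hV (inv_mem_nhds_one G hV)
    have hg' : (fun x => g⁻¹ * x) ⁻¹' (V ∩ V⁻¹) ∈ nhds g := by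
      apply (continuous_const_mul g⁻¹).continuousAt.preimage_mem_nhds
      simpa using hn
    filter_upwards [hg'] with x hx
    have : x = g * (g⁻¹ * x) := by group
    simp only [Set.mem_setOf_eq] at hg ⊢
    rw [this, Measure.modularCharacterFun_map_mul, hker _ hx, mul_one]
    exact hg
end

section
/- Let G be a compactly generated t.d.l.c. group. Then the real vector space CHom(G,ℝ) of group homomorphisms G → (ℝ,+) with open kernel is finite-dimensional. More precisely, if U is a compact open subgroup of G and S ⊆ G is a finite subset such that U together with S generates G, then dim_ℝ CHom(G,ℝ) ≤ |S|. -/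
/-- The kernel of a homomorphism `φ : G → ℝ` (multiplicative to additive),
as a subgroup of `G`. -/
def homKer {G : Type*} [Group G] (φ : G → ℝ)
    (hφ : ∀ x y : G, φ (x * y) = φ x + φ y) : Subgroup G where
  carrier := {g : G | φ g = 0}
  one_mem' := by
    have h := hφ 1 1
    rw [one_mul] at h
    show φ 1 = 0
    linarith
  mul_mem' := by
    intro a b ha hb
    show φ (a * b) = 0
    rw [hφ a b]
    simp only [Set.mem_setOf_eq] at ha hb
    rw [ha, hb, add_zero]
  inv_mem' := by
    intro a ha
    simp only [Set.mem_setOf_eq] at ha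
    show φ a⁻¹ = 0
    have h := hφ a a⁻¹
    rw [mul_inv_cancel] at h
    have h1 := hφ 1 1
    rw [one_mul] at h1
    have : φ 1 = 0 := by linarith
    rw [this] at h
    linarith

/-- `CHom G` is the real vector space of group homomorphisms from `G` to the
additive group `ℝ` whose kernel is open (equivalently, which are continuous for
the discrete topology on `ℝ`), as a linear subspace of `G → ℝ`. -/
def CHom (G : Type*) [Group G] [TopologicalSpace G] [IsTopologicalGroup G] :
    Submodule ℝ (G → ℝ) where
  carrier := {φ : G → ℝ | (∀ x y : G, φ (x * y) = φ x + φ y) ∧ IsOpen {g : G | φ g = 0}}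
  zero_mem' := by
    refine ⟨fun x y => by simp, ?_⟩
    simp only [Pi.zero_apply, Set.setOf_true]; exact isOpen_univ
  add_mem' := by
    rintro φ ψ ⟨hφ, hφo⟩ ⟨hψ, hψo⟩
    have hsum : ∀ x y : G, (φ + ψ) (x * y) = (φ + ψ) x + (φ + ψ) y := by
      intro x y
      simp only [Pi.add_apply, hφ x y, hψ x y]
      ring
    refine ⟨hsum, ?_⟩
    have hle : homKer φ hφ ⊓ homKer ψ hψ ≤ homKer (φ + ψ) hsum := by
      rintro g ⟨hg1, hg2⟩
      show (φ + ψ) g = 0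
      have h1 : φ g = 0 := hg1
      have h2 : ψ g = 0 := hg2
      simp [Pi.add_apply, h1, h2]
    have hopen : IsOpen ((homKer φ hφ ⊓ homKer ψ hψ : Subgroup G) : Set G) := by
      have : ((homKer φ hφ ⊓ homKer ψ hψ : Subgroup G) : Set G)
          = {g : G | φ g = 0} ∩ {g : G | ψ g = 0} := rfl
      rw [this]
      exact hφo.inter hψo
    exact Subgroup.isOpen_mono hle hopen
  smul_mem' := by
    rintro c φ ⟨hφ, hφo⟩
    refine ⟨fun x y => by simp only [Pi.smul_apply, hφ x y, smul_eq_mul]; ring, ?_⟩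
    rcases eq_or_ne c 0 with rfl | hc
    · have : {g : G | ((0 : ℝ) • φ) g = 0} = Set.univ := by
        ext g; simp
      rw [this]; exact isOpen_univ
    · have : {g : G | (c • φ) g = 0} = {g : G | φ g = 0} := by
        ext g
        simp [Pi.smul_apply, smul_eq_mul, hc]
      rw [this]
      exact hφo

theorem chom_vanish {G : Type*} [Group G] [TopologicalSpace G] [IsTopologicalGroup G]
    (U : Subgroup G) (hUc : IsCompact (U : Set G)) (φ : G → ℝ) (hφ : φ ∈ CHom G)
    (u : G) (hu : u ∈ U) : φ u = 0 := by
  obtain ⟨hm, ho⟩ := hφ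
  have h1 : φ 1 = 0 := by
    have h := hm 1 1
    rw [one_mul] at h
    linarith
  have hinv : ∀ x, φ x⁻¹ = - φ x := by
    intro x
    have h := hm x x⁻¹
    rw [mul_inv_cancel, h1] at h
    linarith
  have hc : Continuous φ := by
    refine IsLocallyConstant.continuous ?_
    rw [IsLocallyConstant.iff_exists_open]
    intro x
    refine ⟨(fun g => x⁻¹ * g) ⁻¹' {g : G | φ g = 0}, ho.preimage (continuous_const_mul _), ?_, ?_⟩
    · simp [h1]
    · intro y hy
      have hy' : φ (x⁻¹ * y) = 0 := hy
      rw [hm, hinv] at hy'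
      linarith
  obtain ⟨C, hC⟩ := hUc.exists_bound_of_continuousOn hc.continuousOn
  have hpow : ∀ n : ℕ, φ (u ^ n) = n * φ u := by
    intro n
    induction n with
    | zero => simp [h1]
    | succ k ih => rw [pow_succ, hm, ih]; push_cast; ring
  by_contra hne
  have hpos : 0 < |φ u| := abs_pos.mpr hne
  obtain ⟨n, hn⟩ := Archimedean.arch (C + 1) hpos
  have h2 := hC (u ^ n) (U.pow_mem hu n)
  rw [hpow, Real.norm_eq_abs, abs_mul, Nat.abs_cast] at h2
  rw [nsmul_eq_mul] at hn
  linarith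

/-- Let `G` be a compactly generated t.d.l.c. group: say `U` is a
compact open subgroup and `S` a finite subset such that `U ∪ S` generates `G`.
Then the space `CHom(G,ℝ)` of homomorphisms `G → (ℝ,+)` with open kernel is a
finite-dimensional real vector space of dimension at most `|S|`. -/
theorem chom_finiteDimensional_of_compactlyGenerated {G : Type*} [Group G]
    [TopologicalSpace G] [IsTopologicalGroup G] [LocallyCompactSpace G]
    [TotallyDisconnectedSpace G] [T2Space G]
    (U : Subgroup G) (hUc : IsCompact (U : Set G)) (hUo : IsOpen (U : Set G))
    (S : Finset G) (hgen : Subgroup.closure ((U : Set G) ∪ (S : Set G)) = ⊤) :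
    FiniteDimensional ℝ (CHom G) ∧ Module.finrank ℝ (CHom G) ≤ S.card := by
  have key : ∃ f : CHom G →ₗ[ℝ] (S → ℝ), Function.Injective f := by
    refine ⟨(LinearMap.funLeft ℝ ℝ (fun s : S => (s : G))).comp (CHom G).subtype, ?_⟩
    rw [injective_iff_map_eq_zero]
    rintro ⟨φ, hφ⟩ h0
    have hS : ∀ s ∈ S, φ s = 0 := fun s hs => congrFun h0 ⟨s, hs⟩
    have hle : Subgroup.closure ((U : Set G) ∪ (S : Set G)) ≤ homKer φ hφ.1 := by
      rw [Subgroup.closure_le]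
      rintro g (hg | hg)
      · exact chom_vanish U hUc φ hφ g hg
      · exact hS g hg
    rw [hgen] at hle
    ext g
    exact hle (Subgroup.mem_top g)
  obtain ⟨f, hf⟩ := key
  refine ⟨FiniteDimensional.of_injective f hf, ?_⟩
  have := LinearMap.finrank_le_finrank_of_injective hf
  simpa using this
end

section
/- Let G be a t.d.l.c. group and let X and Y be open subgroups of G such that U := X ∩ Y is compact. Suppose that the canonical group homomorphism from the amalgamated free product X ∗_U Y (the pushout of the two inclusions U ↪ X and U ↪ Y) to G, induced by the inclusions of X and Y into G, is bijective. Then the restriction map φ ↦ (φ|_X, φ|_Y) is an ℝ-linear bijection from CHom(G,ℝ) onto CHom(X,ℝ) × CHom(Y,ℝ). In particular, dim_ℝ CHom(G,ℝ) = dim_ℝ CHom(X,ℝ) + dim_ℝ CHom(Y,ℝ). -/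
/-- Restriction of a homomorphism `G → ℝ` with open kernel to a subgroup
(with the subspace topology), as an `ℝ`-linear map `CHom G →ₗ[ℝ] CHom X`. -/
def CHom.restrict {G : Type*} [Group G] [TopologicalSpace G] [IsTopologicalGroup G]
    (X : Subgroup G) : CHom G →ₗ[ℝ] CHom ↥X where
  toFun φ := ⟨fun x : ↥X => φ.1 (x : G),
    fun x y => by simpa using φ.2.1 (x : G) (y : G),
    by
      have : {x : ↥X | φ.1 (x : G) = 0} = (Subtype.val : ↥X → G) ⁻¹' {g : G | φ.1 g = 0} :=
        rfl
      rw [this]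
      exact φ.2.2.preimage continuous_subtype_val⟩
  map_add' φ ψ := rfl
  map_smul' c φ := rfl

/-- The factors of the amalgam `X ∗_{X ⊓ Y} Y`, indexed by `Bool`. -/
def amalgFactor {G : Type*} [Group G] (X Y : Subgroup G) : Bool → Subgroup G
  | true => X
  | false => Y

/-- The inclusions of `U = X ⊓ Y` into the two factors of the amalgam. -/
def amalgIncl {G : Type*} [Group G] (X Y : Subgroup G) :
    ∀ b : Bool, ↥(X ⊓ Y) →* ↥(amalgFactor X Y b)
  | true => Subgroup.inclusion inf_le_left
  | false => Subgroup.inclusion inf_le_right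

/-- The canonical homomorphism from the amalgamated free product
`X ∗_{X ⊓ Y} Y` (the pushout of the two inclusions) to `G`, induced by the
inclusions of `X` and `Y` into `G`. -/
noncomputable def amalgamToGroup {G : Type*} [Group G] (X Y : Subgroup G) :
    Monoid.PushoutI (amalgIncl X Y) →* G :=
  Monoid.PushoutI.lift (fun b => (amalgFactor X Y b).subtype) (X ⊓ Y).subtype
    (by intro b; cases b <;> (ext x; rfl))

/-- An element of `CHom` as a monoid hom. -/
def CHom.toHom {G : Type*} [Group G] [TopologicalSpace G] [IsTopologicalGroup G]
    (φ : CHom G) : G →* Multiplicative ℝ :=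
  MonoidHom.mk' (fun g => Multiplicative.ofAdd (φ.1 g)) (fun a b => by
    rw [φ.2.1 a b]; rfl)

theorem CHom.vanish {G : Type*} [Group G] [TopologicalSpace G] [IsTopologicalGroup G]
    (φ : CHom G) (K : Subgroup G) (hK : IsCompact (K : Set G)) (u : G) (hu : u ∈ K) :
    φ.1 u = 0 := by
  have h1 : φ.1 1 = 0 := (homKer φ.1 φ.2.1).one_mem
  have hc : Continuous φ.1 := by
    have : Continuous (CHom.toHom φ) := by
      apply continuous_of_continuousAt_one
      have he : (CHom.toHom φ : G → Multiplicative ℝ) =ᶠ[nhds 1] fun _ => 1 := by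
        filter_upwards [φ.2.2.mem_nhds h1] with g hg
        show Multiplicative.ofAdd (φ.1 g) = 1
        have hg' : φ.1 g = 0 := hg
        rw [hg']; rfl
      exact continuousAt_const.congr he.symm
    exact continuous_toAdd.comp this
  obtain ⟨C, hC⟩ := hK.exists_bound_of_continuousOn hc.continuousOn
  have hpow : ∀ n : ℕ, φ.1 (u ^ n) = n * φ.1 u := by
    intro n
    induction n with
    | zero => simp [h1]
    | succ k ih => rw [pow_succ, φ.2.1, ih]; push_cast; ring
  by_contra hne
  obtain ⟨n, hn⟩ := exists_nat_gt (C / |φ.1 u|)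
  have hpos : 0 < |φ.1 u| := abs_pos.mpr hne
  rw [div_lt_iff₀ hpos] at hn
  have := hC (u ^ n) (K.pow_mem hu n)
  rw [hpow, Real.norm_eq_abs, abs_mul, Nat.abs_cast] at this
  linarith

theorem CHom.vanish' {G : Type*} [Group G] [TopologicalSpace G] [IsTopologicalGroup G]
    (X U : Subgroup G) (hUX : U ≤ X) (hU : IsCompact (U : Set G)) (φ : CHom ↥X)
    (u : ↥X) (hu : (u : G) ∈ U) : φ.1 u = 0 := by
  refine CHom.vanish φ (U.subgroupOf X) ?_ u hu
  rw [Subtype.isCompact_iff]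
  convert hU
  ext g
  constructor
  · rintro ⟨x, hx, rfl⟩; exact hx
  · intro hg; exact ⟨⟨g, hUX hg⟩, hg, rfl⟩

/-- The pair of homs on the factors. -/
def amalgPair {G : Type*} [Group G] [TopologicalSpace G] [IsTopologicalGroup G]
    (X Y : Subgroup G) (α : CHom ↥X) (β : CHom ↥Y) :
    ∀ b : Bool, ↥(amalgFactor X Y b) →* Multiplicative ℝ
  | true => CHom.toHom (G := ↥X) α
  | false => CHom.toHom (G := ↥Y) β

theorem amalgamToGroup_of {G : Type*} [Group G] (X Y : Subgroup G) (b : Bool)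
    (x : ↥(amalgFactor X Y b)) :
    amalgamToGroup X Y (Monoid.PushoutI.of b x) = (x : G) := by
  unfold amalgamToGroup
  rw [Monoid.PushoutI.lift_of]; rfl

/-- Let `G` be a t.d.l.c. group, `X, Y` open subgroups with
`U = X ⊓ Y` compact, such that the canonical homomorphism `X ∗_U Y → G` is
bijective.  Then restriction gives an `ℝ`-linear bijection
`CHom(G,ℝ) ≃ CHom(X,ℝ) × CHom(Y,ℝ)`; in particular the dimensions add up. -/
theorem chom_of_amalgam {G : Type*} [Group G] [TopologicalSpace G] [IsTopologicalGroup G]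
    [LocallyCompactSpace G] [TotallyDisconnectedSpace G] [T2Space G]
    (X Y : Subgroup G) (hXo : IsOpen (X : Set G)) (hYo : IsOpen (Y : Set G))
    (hUc : IsCompact ((X ⊓ Y : Subgroup G) : Set G))
    (hbij : Function.Bijective (amalgamToGroup X Y)) :
    Function.Bijective ((CHom.restrict X).prod (CHom.restrict Y)) ∧
      Module.rank ℝ (CHom G) = Module.rank ℝ (CHom ↥X) + Module.rank ℝ (CHom ↥Y) := by
  have hb : Function.Bijective ((CHom.restrict X).prod (CHom.restrict Y)) := by
    constructor
    · intro φ ψ h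
      have hX : ∀ x : ↥X, φ.1 x = ψ.1 x := fun x =>
        congrFun (congrArg Subtype.val (congrArg Prod.fst h)) x
      have hY : ∀ x : ↥Y, φ.1 x = ψ.1 x := fun x =>
        congrFun (congrArg Subtype.val (congrArg Prod.snd h)) x
      have key : (CHom.toHom φ).comp (amalgamToGroup X Y)
          = (CHom.toHom ψ).comp (amalgamToGroup X Y) := by
        apply Monoid.PushoutI.hom_ext_nonempty
        intro b
        refine MonoidHom.ext fun x => ?_
        rw [MonoidHom.comp_apply, MonoidHom.comp_apply, MonoidHom.comp_apply,
          MonoidHom.comp_apply, amalgamToGroup_of]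
        cases b
        · exact congrArg Multiplicative.ofAdd (hY x)
        · exact congrArg Multiplicative.ofAdd (hX x)
      apply Subtype.ext
      funext g
      obtain ⟨p, rfl⟩ := hbij.2 g
      exact congrArg Multiplicative.toAdd (DFunLike.congr_fun key p)
    · rintro ⟨α, β⟩
      have hcomp : ∀ b, (amalgPair X Y α β b).comp (amalgIncl X Y b) = 1 := by
        intro b
        refine MonoidHom.ext fun u => ?_
        cases b
        · show Multiplicative.ofAdd (β.1 ⟨u, u.2.2⟩) = Multiplicative.ofAdd 0
          exact congrArg Multiplicative.ofAdd
            (CHom.vanish' Y (X ⊓ Y) inf_le_right hUc β ⟨u, u.2.2⟩ u.2)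
        · show Multiplicative.ofAdd (α.1 ⟨u, u.2.1⟩) = Multiplicative.ofAdd 0
          exact congrArg Multiplicative.ofAdd
            (CHom.vanish' X (X ⊓ Y) inf_le_left hUc α ⟨u, u.2.1⟩ u.2)
      let Φ := Monoid.PushoutI.lift (amalgPair X Y α β) 1 hcomp
      let e := MulEquiv.ofBijective (amalgamToGroup X Y) hbij
      let Ψ : G →* Multiplicative ℝ := Φ.comp e.symm.toMonoidHom
      have hΨ : ∀ b (x : ↥(amalgFactor X Y b)), Ψ (x : G) = amalgPair X Y α β b x := by
        intro b x
        have h1 : e.symm (x : G) = Monoid.PushoutI.of b x := by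
          rw [MulEquiv.symm_apply_eq]
          exact (amalgamToGroup_of X Y b x).symm
        show Φ (e.symm (x : G)) = _
        rw [h1]
        exact Monoid.PushoutI.lift_of _ _ _ _
      have hΨX : ∀ x : ↥X, (Ψ (x : G)).toAdd = α.1 x := fun x =>
        congrArg Multiplicative.toAdd (hΨ true x)
      have hΨY : ∀ x : ↥Y, (Ψ (x : G)).toAdd = β.1 x := fun x =>
        congrArg Multiplicative.toAdd (hΨ false x)
      have hadd : ∀ x y : G, (Ψ (x * y)).toAdd = (Ψ x).toAdd + (Ψ y).toAdd := by
        intro x y; rw [map_mul]; rfl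
      have hopen : IsOpen {g : G | (Ψ g).toAdd = 0} := by
        have hle : X ⊓ Y ≤ homKer (fun g => (Ψ g).toAdd) hadd := by
          intro g hg
          show (Ψ g).toAdd = 0
          exact (hΨX ⟨g, hg.1⟩).trans
            (CHom.vanish' X (X ⊓ Y) inf_le_left hUc α ⟨g, hg.1⟩ hg)
        exact Subgroup.isOpen_mono hle (hXo.inter hYo)
      refine ⟨⟨fun g => (Ψ g).toAdd, hadd, hopen⟩, ?_⟩
      exact Prod.ext (Subtype.ext (funext hΨX)) (Subtype.ext (funext hΨY))
  refine ⟨hb, ?_⟩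
  rw [(LinearEquiv.ofBijective _ hb).rank_eq, rank_prod']
end

section
/- Let G be a t.d.l.c. group, X an open subgroup of G, U and U' compact open subgroups of X, and θ : U ≃ U' a group isomorphism. Let t ∈ G satisfy t u t⁻¹ = θ(u) for all u ∈ U, and suppose that the canonical group homomorphism from the HNN extension X ∗_U^θ (with base group X, associated subgroups U and U', and stable letter mapped to t) to G, restricting to the inclusion on X, is bijective. Then the map φ ↦ (φ|_X, φ(t)) is an ℝ-linear bijection from CHom(G,ℝ) onto CHom(X,ℝ) × ℝ. In particular, dim_ℝ CHom(G,ℝ) = dim_ℝ CHom(X,ℝ) + 1. -/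
/-- Evaluation of elements of `CHom G` at a fixed group element, as a linear
functional. -/
def CHom.eval {G : Type*} [Group G] [TopologicalSpace G] [IsTopologicalGroup G]
    (t : G) : CHom G →ₗ[ℝ] ℝ where
  toFun φ := φ.1 t
  map_add' φ ψ := rfl
  map_smul' c φ := rfl

/-- The canonical homomorphism from the HNN extension `X ∗_U^θ` to `G`,
restricting to the inclusion on `X` and sending the stable letter to `t`. -/
noncomputable def hnnToGroup {G : Type*} [Group G] (X : Subgroup G) (U U' : Subgroup ↥X)
    (θ : ↥U ≃* ↥U') (t : G)
    (ht : ∀ u : ↥U, t * ((u : ↥X) : G) * t⁻¹ = (((θ u : ↥U') : ↥X) : G)) :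
    HNNExtension ↥X U U' θ →* G :=
  HNNExtension.lift X.subtype t (fun a => by
    have h := ht a
    simp only [Subgroup.coe_subtype]
    rw [← h]
    group)

theorem CHom_one {G : Type*} [Group G] [TopologicalSpace G] [IsTopologicalGroup G]
    (φ : CHom G) : φ.1 1 = 0 := by
  have h := φ.2.1 1 1
  rw [one_mul] at h
  linarith

theorem CHom_vanish {G : Type*} [Group G] [TopologicalSpace G] [IsTopologicalGroup G]
    (φ : CHom G) (K : Subgroup G) (hK : IsCompact (K : Set G)) (k : G) (hk : k ∈ K) :
    φ.1 k = 0 := by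
  have hcont : Continuous φ.1 := by
    rw [continuous_iff_continuousAt]
    intro x
    have hev : ∀ᶠ y in nhds x, φ.1 y = φ.1 x := by
      have ho : IsOpen ((fun y => x⁻¹ * y) ⁻¹' {g : G | φ.1 g = 0}) :=
        φ.2.2.preimage (continuous_const_mul x⁻¹)
      have hx : x ∈ ((fun y => x⁻¹ * y) ⁻¹' {g : G | φ.1 g = 0}) := by
        show φ.1 (x⁻¹ * x) = 0
        rw [inv_mul_cancel, CHom_one]
      filter_upwards [ho.mem_nhds hx] with y hy
      have hy' : φ.1 (x⁻¹ * y) = 0 := hy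
      have h := φ.2.1 x (x⁻¹ * y)
      rw [mul_inv_cancel_left, hy', add_zero] at h
      exact h
    have hc : ContinuousAt (fun _ : G => φ.1 x) x := continuousAt_const
    refine hc.congr ?_
    filter_upwards [hev] with y hy
    exact hy.symm
  obtain ⟨C, hC⟩ := hK.exists_bound_of_continuousOn hcont.continuousOn
  have hpow : ∀ n : ℕ, φ.1 (k ^ n) = n * φ.1 k := by
    intro n
    induction n with
    | zero => simp [CHom_one]
    | succ n ih =>
      rw [pow_succ, φ.2.1, ih]
      push_cast
      ring
  by_contra hne
  have hpos : 0 < |φ.1 k| := abs_pos.mpr hne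
  obtain ⟨n, hn⟩ := exists_nat_gt (C / |φ.1 k|)
  rw [div_lt_iff₀ hpos] at hn
  have h := hC (k ^ n) (K.pow_mem hk n)
  rw [hpow, Real.norm_eq_abs, abs_mul, Nat.abs_cast] at h
  linarith

/-- Let `G` be a t.d.l.c. group, `X` an open subgroup, `U, U'`
compact open subgroups of `X`, `θ : U ≃* U'` and `t ∈ G` with `t u t⁻¹ = θ u`
for all `u ∈ U`.  If the canonical homomorphism `X ∗_U^θ → G` from the HNN
extension is bijective, then `φ ↦ (φ|_X, φ t)` is an `ℝ`-linear bijection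
`CHom(G,ℝ) ≃ CHom(X,ℝ) × ℝ`; in particular the dimension grows by one. -/
theorem chom_of_hnn {G : Type*} [Group G] [TopologicalSpace G] [IsTopologicalGroup G]
    [LocallyCompactSpace G] [TotallyDisconnectedSpace G] [T2Space G]
    (X : Subgroup G) (hXo : IsOpen (X : Set G))
    (U U' : Subgroup ↥X)
    (hUc : IsCompact (U : Set ↥X)) (hUo : IsOpen (U : Set ↥X))
    (hU'c : IsCompact (U' : Set ↥X)) (hU'o : IsOpen (U' : Set ↥X))
    (θ : ↥U ≃* ↥U') (t : G)
    (ht : ∀ u : ↥U, t * ((u : ↥X) : G) * t⁻¹ = (((θ u : ↥U') : ↥X) : G))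
    (hbij : Function.Bijective (hnnToGroup X U U' θ t ht)) :
    Function.Bijective ((CHom.restrict X).prod (CHom.eval t)) ∧
      Module.rank ℝ (CHom G) = Module.rank ℝ (CHom ↥X) + 1 := by
  have hof : ∀ x : ↥X, hnnToGroup X U U' θ t ht (HNNExtension.of x) = (x : G) := by
    intro x
    simp [hnnToGroup]
  have htt : hnnToGroup X U U' θ t ht HNNExtension.t = t := by
    simp [hnnToGroup]
  have hb : Function.Bijective ((CHom.restrict X).prod (CHom.eval t)) := by
    constructor
    · rintro φ ψ h
      have h1 : ∀ x : ↥X, φ.1 (x : G) = ψ.1 (x : G) := fun x =>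
        congrFun (congrArg Subtype.val (congrArg Prod.fst h)) x
      have h2 : φ.1 t = ψ.1 t := congrArg Prod.snd h
      let F : CHom G → (G →* Multiplicative ℝ) := fun φ =>
        { toFun := fun g => Multiplicative.ofAdd (φ.1 g)
          map_one' := by rw [CHom_one]; rfl
          map_mul' := fun x y => by rw [φ.2.1]; rfl }
      have hF : (F φ).comp (hnnToGroup X U U' θ t ht)
          = (F ψ).comp (hnnToGroup X U U' θ t ht) := by
        apply HNNExtension.hom_ext
        · ext x
          show φ.1 (hnnToGroup X U U' θ t ht (HNNExtension.of x))
            = ψ.1 (hnnToGroup X U U' θ t ht (HNNExtension.of x))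
          rw [hof, h1]
        · show φ.1 (hnnToGroup X U U' θ t ht HNNExtension.t)
            = ψ.1 (hnnToGroup X U U' θ t ht HNNExtension.t)
          rw [htt, h2]
      apply Subtype.ext
      funext g
      obtain ⟨w, rfl⟩ := hbij.2 g
      exact DFunLike.congr_fun hF w
    · rintro ⟨ψ, r⟩
      let f : ↥X →* Multiplicative ℝ :=
        { toFun := fun g => Multiplicative.ofAdd (ψ.1 g)
          map_one' := by rw [CHom_one]; rfl
          map_mul' := fun x y => by rw [ψ.2.1]; rfl }
      let L : HNNExtension ↥X U U' θ →* Multiplicative ℝ :=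
        HNNExtension.lift f (Multiplicative.ofAdd r) (by
          intro a
          have e1 : f (a : ↥X) = 1 := CHom_vanish ψ U hUc a a.2
          have e2 : f (θ a : ↥X) = 1 := CHom_vanish ψ U' hU'c (θ a) (θ a).2
          rw [e1, e2, mul_one, one_mul])
      let e := MulEquiv.ofBijective (hnnToGroup X U U' θ t ht) hbij
      have hex : ∀ x : ↥X, e.symm (x : G) = HNNExtension.of x := fun x =>
        e.symm_apply_eq.mpr (hof x).symm
      have het : e.symm t = HNNExtension.t := e.symm_apply_eq.mpr htt.symm
      let φ : G → ℝ := fun g => Multiplicative.toAdd (L (e.symm g))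
      have hφ : ∀ x y : G, φ (x * y) = φ x + φ y := fun x y => by
        simp only [φ, map_mul, toAdd_mul]
      have hφx : ∀ x : ↥X, φ (x : G) = ψ.1 x := fun x => by
        simp only [φ, hex, L, HNNExtension.lift_of]
        rfl
      have hφt : φ t = r := by
        simp only [φ, het, L, HNNExtension.lift_t]
        rfl
      have hopen : IsOpen {g : G | φ g = 0} := by
        have ho : IsOpen ((Subtype.val : ↥X → G) '' {x : ↥X | ψ.1 x = 0}) :=
          hXo.isOpenMap_subtype_val _ ψ.2.2
        let S : Subgroup G := (homKer ψ.1 ψ.2.1).map X.subtype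
        have hle : S ≤ homKer φ hφ := by
          rintro _ ⟨x, hx, rfl⟩
          show φ (x : G) = 0
          rw [hφx]
          exact hx
        exact Subgroup.isOpen_mono (H₁ := S) hle ho
      refine ⟨⟨φ, hφ, hopen⟩, ?_⟩
      refine Prod.ext ?_ hφt
      apply Subtype.ext
      funext x
      exact hφx x
  refine ⟨hb, ?_⟩
  rw [(LinearEquiv.ofBijective _ hb).rank_eq]
  simp
end

section
/- Let A be a unital C*-algebra and let τ : A → ℂ be a positive faithful trace, i.e., a ℂ-linear map with τ(ab) = τ(ba) for all a, b, with τ(a* a) a nonnegative real number for every a, and such that τ(a* a) = 0 implies a* a = 0. Then for every idempotent e ∈ A (e² = e), the value τ(e) is a real number satisfying 0 ≤ τ(e) ≤ τ(1); moreover τ(e) = 0 if and only if e = 0. -/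
open ComplexOrder

theorem isUnit_one_add_skew {A : Type*} [NormedRing A] [StarRing A]
    [CStarRing A] [NormedAlgebra ℂ A] [StarModule ℂ A] [CompleteSpace A]
    (d : A) (hd : star d = -d) : IsUnit (1 + d) := by
  have hs : IsSelfAdjoint (Complex.I • d) := by
    rw [IsSelfAdjoint, star_smul, hd]; simp
  have hn : -Complex.I ∉ spectrum ℂ (Complex.I • d) := by
    intro h
    letI : CStarAlgebra A := {}
    have := congrArg Complex.im (IsSelfAdjoint.mem_spectrum_eq_re (A := A) hs h)
    simp at this
  rw [spectrum.notMem_iff] at hn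
  have h2 : algebraMap ℂ A (-Complex.I) - Complex.I • d = algebraMap ℂ A (-Complex.I) * (1 + d) := by
    rw [mul_add, ← Algebra.smul_def, ← Algebra.smul_def, Algebra.algebraMap_eq_smul_one, neg_smul, neg_smul,
      sub_eq_add_neg]
  have h3 : IsUnit (algebraMap ℂ A (-Complex.I)) :=
    (IsUnit.mk0 (-Complex.I) (by simp)).map (algebraMap ℂ A)
  rw [h2] at hn
  obtain ⟨u, hu⟩ := h3
  rw [← hu] at hn
  simpa using hn

/-- Let `τ` be a positive faithful trace on a unital C*-algebra
`A`.  Then for every idempotent `e` the value `τ(e)` is a (real) number with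
`0 ≤ τ(e) ≤ τ(1)`, and `τ(e) = 0` if and only if `e = 0`.  (Here `ℂ` carries its
partial order, so `0 ≤ z` means that `z` is a nonnegative real number.) -/
theorem trace_idempotent_nonneg_le_trace_one {A : Type*} [NormedRing A] [StarRing A]
    [CStarRing A] [NormedAlgebra ℂ A] [StarModule ℂ A] [CompleteSpace A]
    (τ : A →ₗ[ℂ] ℂ) (htr : ∀ a b : A, τ (a * b) = τ (b * a))
    (hpos : ∀ a : A, 0 ≤ τ (star a * a))
    (hfaith : ∀ a : A, τ (star a * a) = 0 → star a * a = 0)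
    (e : A) (he : e * e = e) :
    0 ≤ τ e ∧ τ e ≤ τ 1 ∧ (τ e = 0 ↔ e = 0) := by
  obtain ⟨p, hps, hpp, hep, hpe⟩ : ∃ p : A, star p = p ∧ p * p = p ∧ e * p = p ∧ p * e = e := by
    have hf : star e * star e = star e := by rw [← star_mul, he]
    have u1 : IsUnit (1 + (e - star e)) := isUnit_one_add_skew _ (by simp)
    have u2 : IsUnit (1 + (star e - e)) := isUnit_one_add_skew _ (by simp)
    have hz := u1.mul u2
    have hze : (1 + (e - star e)) * (1 + (star e - e)) = 1 - e - star e + e * star e + star e * e := by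
      have : (1 + (e - star e)) * (1 + (star e - e)) =
        1 - e * e - star e * star e + e * star e + star e * e := by noncomm_ring
      rw [this, he, hf]
    rw [hze] at hz
    obtain ⟨z, hz⟩ := hz
    have c1 : e * z = e * star e * e := by
      rw [hz]; simp only [mul_add, mul_sub, ← mul_assoc, he, mul_one]; abel
    have c2 : z * e = e * star e * e := by
      rw [hz]; simp only [add_mul, sub_mul, mul_assoc, he, one_mul]; abel
    have hzs : star (z : A) = z := by
      rw [hz]; simp only [star_add, star_sub, star_mul, star_star, star_one]; abel
    have k1 : Commute e (z : A) := c1.trans c2.symm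
    have k2 : Commute (star e) (z : A) := by
      have := k1.star_star; rwa [hzs] at this
    have k1' : Commute e ((z⁻¹ : Aˣ) : A) := k1.units_inv_right
    have k2' : Commute (star e) ((z⁻¹ : Aˣ) : A) := k2.units_inv_right
    have hws : star ((z⁻¹ : Aˣ) : A) = ((z⁻¹ : Aˣ) : A) := by
      have : star z = z := Units.ext hzs
      rw [← Units.coe_star, star_inv, this]
    have hpe : e * star e * ((z⁻¹ : Aˣ) : A) * e = e := by
      rw [mul_assoc, ← k1'.eq, ← mul_assoc, ← c1, mul_assoc, Units.mul_inv, mul_one]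
    refine ⟨e * star e * ((z⁻¹ : Aˣ) : A), ?_, ?_, ?_, hpe⟩
    · rw [star_mul, star_mul, star_star, hws, (k1'.mul_left k2').eq]
    · simp only [← mul_assoc, hpe]
    · simp only [← mul_assoc, he]
  have ht : τ e = τ p := by rw [← hep, htr, hpe]
  have h0 := hpos p
  have h1 := hpos (1 - p)
  have h2 : star (1 - p) * (1 - p) = 1 - p := by
    rw [star_sub, star_one, hps, mul_sub, sub_mul, sub_mul, hpp]; simp
  rw [h2, map_sub, sub_nonneg] at h1
  have h3 := hfaith p
  rw [hps, hpp] at h0 h3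
  rw [ht]
  refine ⟨h0, h1, fun h => ?_, fun h => ?_⟩
  · rw [← hpe, h3 h, zero_mul]
  · rw [← ht, h, map_zero]
end
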